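/- arXiv:1311.5319 — 3 statements merged into one kernel-verified Lean document; each statement's English description precedes it below -/
import Mathlib

section
/- Let q ≥ 3 and a be integers with gcd(a,q) = 1, let k be a positive integer, and let ℓ_1 < ℓ_2 < ⋯ be the increasing sequence of all primes congruent to a mod q. Suppose t ≥ 0 is such that k < ℓ_{t+1}. Let g = (ℓ_{t+1} ⋯ ℓ_{t+k})^{-1} ∏_{p ≤ ℓ_{t+k}} p, the product of all primes p ≤ ℓ_{t+k} other than ℓ_{t+1}, …, ℓ_{t+k}. Then the k-tuple of linear forms gqx + ℓ_{t+1}, …, gqx + ℓ_{t+k} is admissible: for every prime p, #{n mod p : ∏_{i=1}^{k} (gqn + ℓ_{t+i}) ≡ 0 mod p} < p. -/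
open scoped Classical

/-- The property of being a prime congruent to `a` mod `q`. -/
def PrimeMod (q : ℕ) (a : ℤ) (p : ℕ) : Prop :=
  p.Prime ∧ (p : ℤ) ≡ a [ZMOD (q : ℤ)]

/-- `ell q a i` is the `i`-th prime congruent to `a` mod `q` (1-indexed), so that
`ℓ_1 < ℓ_2 < ⋯` is the increasing sequence of all primes congruent to `a` mod `q`. -/
noncomputable def ell (q : ℕ) (a : ℤ) (i : ℕ) : ℕ :=
  Nat.nth (PrimeMod q a) (i - 1)

/-- `gShiu q a k t = (ℓ_{t+1} ⋯ ℓ_{t+k})⁻¹ ∏_{p ≤ ℓ_{t+k}} p`: the product of all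
primes `p ≤ ℓ_{t+k}` other than `ℓ_{t+1}, …, ℓ_{t+k}`. -/
noncomputable def gShiu (q : ℕ) (a : ℤ) (k t : ℕ) : ℕ :=
  ∏ p ∈ (Finset.range (ell q a (t + k) + 1)).filter
      (fun p => p.Prime ∧ ∀ j ∈ Finset.Icc 1 k, p ≠ ell q a (t + j)), p

lemma primeMod_infinite (q : ℕ) (a : ℤ) (hq : 3 ≤ q) (ha : Int.gcd a q = 1) :
    (Set.ofPred (PrimeMod q a)).Infinite := by
  have : NeZero q := ⟨by omega⟩
  have hu : IsUnit (a : ZMod q) := by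
    rw [ZMod.coe_int_isUnit_iff_isCoprime, Int.isCoprime_iff_gcd_eq_one, Int.gcd_comm]
    exact ha
  have h := Nat.infinite_setOfPred_prime_and_eq_mod hu
  refine h.mono ?_
  rintro p ⟨hp, hpa⟩
  refine ⟨hp, ?_⟩
  rw [← ZMod.intCast_eq_intCast_iff]
  simpa using hpa

lemma ell_primeMod (q : ℕ) (a : ℤ) (hq : 3 ≤ q) (ha : Int.gcd a q = 1) (i : ℕ) :
    PrimeMod q a (ell q a i) :=
  Nat.nth_mem_of_infinite (primeMod_infinite q a hq ha) _

lemma ell_mono (q : ℕ) (a : ℤ) (hq : 3 ≤ q) (ha : Int.gcd a q = 1) {i j : ℕ} (h : i ≤ j) :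
    ell q a i ≤ ell q a j :=
  (Nat.nth_strictMono (primeMod_infinite q a hq ha)).monotone (Nat.sub_le_sub_right h 1)

/-- With `q ≥ 3`, `gcd(a, q) = 1`, `k ≥ 1` and `t ≥ 0` such that `k < ℓ_{t+1}`, the
`k`-tuple of linear forms `gqx + ℓ_{t+1}, …, gqx + ℓ_{t+k}` is admissible: for every
prime `p`, the number of residue classes `n mod p` with
`∏_{i=1}^{k} (gqn + ℓ_{t+i}) ≡ 0 (mod p)` is strictly less than `p`. -/
theorem shiu_tuple_admissible (q : ℕ) (a : ℤ) (hq : 3 ≤ q) (ha : Int.gcd a q = 1)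
    (k : ℕ) (hk : 0 < k) (t : ℕ) (ht : k < ell q a (t + 1)) :
    ∀ p : ℕ, p.Prime →
      ((Finset.range p).filter
        (fun n : ℕ =>
          (∏ j ∈ Finset.Icc 1 k, (gShiu q a k t * q * n + ell q a (t + j))) % p
            = 0)).card < p := by
  intro p hp
  by_cases hd : p ∣ gShiu q a k t * q
  · rw [Finset.filter_false_of_mem]
    · simpa using hp.pos
    · intro n _ h0
      obtain ⟨j, hj, hdj⟩ := (hp.prime.dvd_finsetProd_iff _).1 (Nat.dvd_of_mod_eq_zero h0)
      have hl : p ∣ ell q a (t + j) := (Nat.dvd_add_right (hd.mul_right n)).1 hdj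
      obtain ⟨hlp, hla⟩ := ell_primeMod q a hq ha (t + j)
      have hpe : p = ell q a (t + j) := (Nat.prime_dvd_prime_iff_eq hp hlp).1 hl
      rcases hp.dvd_mul.1 hd with hg | hpq
      · obtain ⟨r, hr, hdr⟩ := (hp.prime.dvd_finsetProd_iff _).1 hg
        rw [Finset.mem_filter] at hr
        have hpr : p = r := (Nat.prime_dvd_prime_iff_eq hp hr.2.1).1 hdr
        exact hr.2.2 j hj (hpr ▸ hpe)
      · have h1 : (p : ℤ) ∣ (q : ℤ) := Int.natCast_dvd_natCast.2 hpq
        have h2 : (p : ℤ) ∣ a - (ell q a (t + j) : ℤ) := h1.trans hla.dvd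
        have h3 : (p : ℤ) ∣ a :=
          by simpa using dvd_add h2 (Int.natCast_dvd_natCast.2 hl)
        have h4 : (p : ℤ) ∣ (Int.gcd a q : ℤ) := Int.dvd_coe_gcd h3 h1
        rw [ha] at h4
        exact hp.one_lt.ne' (Nat.dvd_one.1 (Int.natCast_dvd_natCast.1 h4))
  · have hkp : k < p := by
      refine lt_of_lt_of_le ht ?_
      by_contra! hlt
      apply hd
      apply Dvd.dvd.mul_right
      apply Finset.dvd_prod_of_mem (fun p : ℕ => p)
      rw [Finset.mem_filter, Finset.mem_range]
      refine ⟨?_, hp, ?_⟩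
      · have := ell_mono q a hq ha (show t + 1 ≤ t + k by omega)
        omega
      · intro j hj
        rw [Finset.mem_Icc] at hj
        have := ell_mono q a hq ha (show t + 1 ≤ t + j by omega)
        omega
    refine lt_of_le_of_lt ?_ hkp
    set G := gShiu q a k t * q with hG
    have hsub : ((Finset.range p).filter (fun n : ℕ =>
          (∏ j ∈ Finset.Icc 1 k, (G * n + ell q a (t + j))) % p = 0)) ⊆
        (Finset.Icc 1 k).biUnion (fun j => (Finset.range p).filter
          (fun n : ℕ => p ∣ G * n + ell q a (t + j))) := by
      intro n hn
      rw [Finset.mem_filter] at hn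
      obtain ⟨j, hj, hdj⟩ := (hp.prime.dvd_finsetProd_iff _).1 (Nat.dvd_of_mod_eq_zero hn.2)
      exact Finset.mem_biUnion.2 ⟨j, hj, Finset.mem_filter.2 ⟨hn.1, hdj⟩⟩
    refine (Finset.card_le_card hsub).trans ?_
    refine (Finset.card_biUnion_le_card_mul _ _ 1 ?_).trans (by simp)
    intro j _
    rw [Finset.card_le_one]
    intro x hx y hy
    rw [Finset.mem_filter, Finset.mem_range] at hx hy
    have h1 : G * x + ell q a (t + j) ≡ G * y + ell q a (t + j) [MOD p] :=
      ((Nat.modEq_zero_iff_dvd).2 hx.2).trans ((Nat.modEq_zero_iff_dvd).2 hy.2).symm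
    have h2 : G * x ≡ G * y [MOD p] := Nat.ModEq.add_right_cancel' _ h1
    have h3 : x ≡ y [MOD p] :=
      Nat.ModEq.cancel_left_of_coprime ((Nat.Prime.coprime_iff_not_dvd hp).2 hd) h2
    exact h3.eq_of_lt_of_lt hx.1 hy.1
end

section
/- Let q ≥ 3 and a be integers with gcd(a,q) = 1, let ℓ_1 < ℓ_2 < ⋯ be the increasing sequence of all primes congruent to a mod q, and let k ≥ 2 and M ≥ 1 be integers. If ℓ_{t+k} ≥ ℓ_{t+1}² for every t ∈ {1, 2, …, (k−1)M + k}, then ℓ_{(k−1)(M+1) + k + 1} ≥ ℓ_{k+1}^{2(M+1)}. -/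
/-- Let `q ≥ 3`, `gcd(a, q) = 1`, `k ≥ 2` and `M ≥ 1`.  If `ℓ_{t+k} ≥ ℓ_{t+1}²` for
every `t ∈ {1, 2, …, (k−1)M + k}`, then
`ℓ_{(k−1)(M+1) + k + 1} ≥ ℓ_{k+1}^{2(M+1)}`. -/
theorem ell_iterated_squaring (q : ℕ) (a : ℤ) (hq : 3 ≤ q) (ha : Int.gcd a q = 1)
    (k M : ℕ) (hk : 2 ≤ k) (hM : 1 ≤ M)
    (h : ∀ t ∈ Finset.Icc 1 ((k - 1) * M + k),
      ell q a (t + 1) ^ 2 ≤ ell q a (t + k)) :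
    ell q a (k + 1) ^ (2 * (M + 1)) ≤ ell q a ((k - 1) * (M + 1) + k + 1) := by
  have key : ∀ j ≤ M + 1, ell q a (k + 1) ^ (2 ^ j) ≤ ell q a ((k - 1) * j + k + 1) := by
    intro j
    induction j with
    | zero => intro _; simp
    | succ j ih =>
      intro hj
      have h1 := ih (by omega)
      have hle : (k - 1) * j ≤ (k - 1) * M := Nat.mul_le_mul_left _ (by omega)
      have h2 := h ((k - 1) * j + k) (Finset.mem_Icc.mpr ⟨by omega, by omega⟩)
      have e : (k - 1) * (j + 1) + k + 1 = (k - 1) * j + k + k := by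
        rw [Nat.mul_add]; omega
      rw [e, pow_succ, pow_mul]
      exact (Nat.pow_le_pow_left h1 2).trans h2
  refine le_trans ?_ (key (M + 1) le_rfl)
  have hexp : 2 * (M + 1) ≤ 2 ^ (M + 1) := by
    have : M < 2 ^ M := Nat.lt_two_pow_self
    rw [pow_succ]; omega
  rcases Nat.eq_zero_or_pos (ell q a (k + 1)) with h0 | h0
  · rw [h0, zero_pow (by omega)]; exact Nat.zero_le _
  · exact Nat.pow_le_pow_right h0 hexp
end

section
/- There exist absolute positive constants A and N such that the following holds. For all integers q ≥ 3 and a with gcd(a,q) = 1 and every integer k ≥ 2, there exists an integer t ≥ 1 with k < ℓ_{t+1}, ℓ_{t+k} < ℓ_{t+1}², and ℓ_{t+k} − ℓ_{t+1} < A q^N k² log(qk), where ℓ_1 < ℓ_2 < ⋯ is the increasing sequence of all primes congruent to a mod q. -/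
open Finset in
lemma aux_abel (c : ℕ → ℂ) (b : ℕ → ℝ) (B : ℝ) (hc : ∀ M, ‖∑ n ∈ range M, c n‖ ≤ B)
    (hb : Antitone b) (hb0 : ∀ n, 0 ≤ b n) (M : ℕ) :
    ‖∑ n ∈ range M, (b n : ℂ) * c n‖ ≤ B * b 0 := by
  have key : ∀ M : ℕ, ∑ n ∈ range M, (b n : ℂ) * c n = (b M : ℂ) * ∑ n ∈ range M, c n +
      ∑ n ∈ range M, ((b n - b (n + 1) : ℝ) : ℂ) * ∑ i ∈ range (n + 1), c i := by
    intro M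
    induction M with
    | zero => simp
    | succ M ih =>
      rw [sum_range_succ, ih, sum_range_succ (fun n => ((b n - b (n + 1) : ℝ) : ℂ) * ∑ i ∈ range (n + 1), c i) M,
        sum_range_succ c M]
      push_cast
      ring
  have tel : ∑ n ∈ range M, (b n - b (n + 1)) = b 0 - b M := by
    rw [sum_range_sub']
  rw [key]
  calc _ ≤ ‖(b M : ℂ) * ∑ n ∈ range M, c n‖ +
      ∑ n ∈ range M, ‖((b n - b (n + 1) : ℝ) : ℂ) * ∑ i ∈ range (n + 1), c i‖ :=
        (norm_add_le _ _).trans (add_le_add_right (norm_sum_le _ _) _)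
    _ ≤ b M * B + ∑ n ∈ range M, (b n - b (n + 1)) * B := by
        have h (x : ℝ) (hx : 0 ≤ x) (k : ℕ) : ‖(x : ℂ) * ∑ i ∈ range k, c i‖ ≤ x * B := by
          rw [norm_mul, Complex.norm_of_nonneg hx]
          exact mul_le_mul_of_nonneg_left (hc k) hx
        exact add_le_add (h _ (hb0 _) _)
          (sum_le_sum fun n _ => h _ (sub_nonneg.2 (hb (Nat.le_succ n))) _)
    _ = B * b 0 := by rw [← sum_mul, tel]; ring

open Finset in
lemma aux_char_sum {q : ℕ} [NeZero q] (χ : DirichletCharacter ℂ q) (hχ : χ ≠ 1) (M : ℕ) :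
    ‖∑ n ∈ range M, χ (n : ZMod q)‖ ≤ q := by
  have h0 : ∑ n ∈ range q, χ (n : ZMod q) = 0 := by
    rw [← MulChar.sum_eq_zero_of_ne_one hχ]
    refine sum_bij' (fun n _ => (n : ZMod q)) (fun a _ => a.val) ?_ ?_ ?_ ?_ ?_
    · simp
    · intro a _; simpa using ZMod.val_lt a
    · intro n hn; exact ZMod.val_cast_of_lt (by simpa using hn)
    · intro a _; simp
    · simp
  induction M using Nat.strong_induction_on with
  | _ M ih =>
    rcases lt_or_ge M q with h | h
    · calc _ ≤ ∑ n ∈ range M, ‖χ (n : ZMod q)‖ := norm_sum_le _ _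
        _ ≤ ∑ n ∈ range M, (1 : ℝ) := sum_le_sum fun n _ => χ.norm_le_one _
        _ = M := by simp
        _ ≤ q := by exact_mod_cast h.le
    · obtain ⟨d, rfl⟩ := Nat.exists_eq_add_of_le h
      rw [sum_range_add, h0, zero_add]
      simpa using ih d (by have := NeZero.pos q; omega)

open Finset in
lemma aux_char_sum' {q : ℕ} [NeZero q] (χ : DirichletCharacter ℂ q) (hχ : χ ≠ 1) (m M : ℕ) :
    ‖∑ n ∈ range M, χ ((m + n : ℕ) : ZMod q)‖ ≤ 2 * q := by
  have := sum_range_add (fun n : ℕ => χ (n : ZMod q)) m M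
  rw [← sub_eq_iff_eq_add'] at this
  rw [← this]
  refine (norm_sub_le _ _).trans ?_
  linarith [aux_char_sum χ hχ m, aux_char_sum χ hχ (m + M)]

open Finset in
lemma aux_char_abel {q : ℕ} [NeZero q] (χ : DirichletCharacter ℂ q) (hχ : χ ≠ 1)
    (b : ℕ → ℝ) (m : ℕ) (hb : ∀ i j, m ≤ i → i ≤ j → b j ≤ b i) (hb0 : ∀ n, m ≤ n → 0 ≤ b n)
    (M : ℕ) :
    ‖∑ n ∈ range M, (b (m + n) : ℂ) * χ ((m + n : ℕ) : ZMod q)‖ ≤ 2 * q * b m := by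
  have := aux_abel (fun n => χ ((m + n : ℕ) : ZMod q)) (fun n => b (m + n)) (2 * q)
    (aux_char_sum' χ hχ m) (fun i j hij => hb _ _ (by omega) (by omega))
    (fun n => hb0 _ (by omega)) M
  simpa using this

lemma aux_tsum_le (f : ℕ → ℂ) (hf : Summable f) (B : ℝ)
    (h : ∀ M, ‖∑ n ∈ Finset.range M, f n‖ ≤ B) : ‖∑' n, f n‖ ≤ B :=
  le_of_tendsto hf.hasSum.tendsto_sum_nat.norm (Filter.Eventually.of_forall h)

lemma aux_term {q : ℕ} (χ : DirichletCharacter ℂ q) (s : ℝ) (n : ℕ) (hn : n ≠ 0) :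
    LSeries.term (fun n => χ (n : ZMod q)) s n = ((((n : ℝ) ^ s)⁻¹ : ℝ) : ℂ) * χ (n : ZMod q) := by
  rw [LSeries.term_of_ne_zero hn, div_eq_inv_mul, Complex.ofReal_inv,
    Complex.ofReal_cpow (Nat.cast_nonneg n)]
  simp

lemma aux_summable {q : ℕ} [NeZero q] (χ : DirichletCharacter ℂ q) {s : ℝ} (hs : 1 < s) :
    LSeriesSummable (fun n => χ (n : ZMod q)) s :=
  DirichletCharacter.LSeriesSummable_of_one_lt_re χ (by simpa using hs)

lemma aux_anti {s : ℝ} (hs : 0 < s) (i j : ℕ) (hi : 1 ≤ i) (hij : i ≤ j) :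
    (((j : ℝ) ^ s)⁻¹ : ℝ) ≤ ((i : ℝ) ^ s)⁻¹ := by
  have : (0 : ℝ) < i := by exact_mod_cast hi
  gcongr

open Finset in
/-- tail bound -/
lemma aux_tail {q : ℕ} [NeZero q] (χ : DirichletCharacter ℂ q) (hχ : χ ≠ 1) {s : ℝ} (hs : 1 < s)
    (m : ℕ) (hm : 1 ≤ m) :
    ‖LSeries (fun n => χ (n : ZMod q)) s -
      ∑ n ∈ range m, LSeries.term (fun n => χ (n : ZMod q)) s n‖ ≤ 2 * q * ((m : ℝ) ^ s)⁻¹ := by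
  have h1 := (aux_summable χ hs).sum_add_tsum_nat_add m
  rw [LSeries, ← h1, add_sub_cancel_left]
  refine aux_tsum_le _ ((summable_nat_add_iff m).2 (aux_summable χ hs)) _ fun M => ?_
  have := aux_char_abel χ hχ (fun n => ((n : ℝ) ^ s)⁻¹) m
    (fun i j hi hij => aux_anti (by linarith) i j (by omega) hij) (fun n _ => by positivity) M
  refine le_trans (le_of_eq ?_) this
  congr 1
  refine sum_congr rfl fun n _ => ?_
  rw [add_comm n m, aux_term _ _ _ (by omega)]

open Finset in
lemma aux_L_le {q : ℕ} [NeZero q] (χ : DirichletCharacter ℂ q) (hχ : χ ≠ 1) {s : ℝ} (hs : 1 < s) :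
    ‖LSeries (fun n => χ (n : ZMod q)) s‖ ≤ 2 * q := by
  simpa using aux_tail χ hχ hs 1 le_rfl

open Finset in
lemma aux_L'_le {q : ℕ} [NeZero q] (χ : DirichletCharacter ℂ q) (hχ : χ ≠ 1) {s : ℝ} (hs : 1 < s) :
    ‖deriv (LSeries (fun n => χ (n : ZMod q))) s‖ ≤ 4 * q := by
  have hab : LSeries.abscissaOfAbsConv (fun n => χ (n : ZMod q)) < ((s : ℂ).re : EReal) := by
    rw [DirichletCharacter.absicssaOfAbsConv_eq_one (NeZero.ne q), Complex.ofReal_re]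
    exact_mod_cast hs
  have hsum := LSeriesSummable_logMul_of_lt_re hab
  rw [LSeries_deriv hab, norm_neg, LSeries, ← hsum.sum_add_tsum_nat_add 3]
  have hlog (n : ℕ) : Complex.log n = ((Real.log n : ℝ) : ℂ) := by simp
  have hterm (n : ℕ) (hn : n ≠ 0) : LSeries.term (LSeries.logMul (fun n => χ (n : ZMod q))) s n =
      ((Real.log n / (n : ℝ) ^ s : ℝ) : ℂ) * χ (n : ZMod q) := by
    have := aux_term χ s n hn
    rw [LSeries.term_of_ne_zero hn] at this ⊢
    rw [LSeries.logMul, mul_div_assoc, this, hlog]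
    push_cast
    ring
  have hsmall (n : ℕ) (hn : 2 ≤ n) : Real.log n / (n : ℝ) ^ s ≤ 1 := by
    have h0 : (1 : ℝ) ≤ n := by exact_mod_cast (by omega : 1 ≤ n)
    rw [div_le_one (by positivity)]
    calc Real.log n ≤ n := by linarith [Real.log_le_sub_one_of_pos (by linarith : (0 : ℝ) < n)]
      _ = (n : ℝ) ^ (1 : ℝ) := by simp
      _ ≤ _ := Real.rpow_le_rpow_of_exponent_le h0 hs.le
  have hq : (1 : ℝ) ≤ q := by exact_mod_cast NeZero.one_le
  have hA : ‖∑ n ∈ range 3, LSeries.term (LSeries.logMul (fun n => χ (n : ZMod q))) s n‖ ≤ 1 := by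
    rw [sum_range_succ, sum_range_succ, sum_range_one, hterm 1 (by omega), hterm 2 (by omega)]
    simp only [LSeries.term_zero, Nat.cast_one, Real.log_one, zero_div, Complex.ofReal_zero,
      zero_mul, zero_add]
    rw [norm_mul, Complex.norm_of_nonneg (by positivity)]
    have := hsmall 2 le_rfl
    exact mul_le_one₀ this (norm_nonneg _) (χ.norm_le_one _)
  have hB : ‖∑' n, LSeries.term (LSeries.logMul (fun n => χ (n : ZMod q))) s (n + 3)‖ ≤
      2 * q * 1 := by
    refine aux_tsum_le _ ((summable_nat_add_iff 3).2 hsum) _ fun M => ?_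
    have := aux_char_abel χ hχ (fun n => Real.log n / (n : ℝ) ^ s) 3 ?_ ?_ M
    · refine le_trans (le_of_eq ?_) (this.trans
        (mul_le_mul_of_nonneg_left (hsmall 3 (by omega)) (by positivity)))
      congr 1
      refine sum_congr rfl fun n _ => ?_
      rw [add_comm n 3, hterm _ (by omega)]
    · intro i j hi hij
      have he : Real.exp s⁻¹ ≤ i := by
        have h1 : s⁻¹ ≤ 1 := inv_le_one_of_one_le₀ hs.le
        have h2 := Real.exp_le_exp.2 h1
        have h3 := Real.exp_one_lt_d9
        have : (3 : ℝ) ≤ i := by exact_mod_cast hi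
        linarith
      have hij' : (i : ℝ) ≤ j := by exact_mod_cast hij
      exact Real.log_div_self_rpow_antitoneOn (by linarith : 0 < s) he (he.trans hij') hij'
    · intro n _
      have := Real.log_natCast_nonneg n
      positivity
  refine (norm_add_le _ _).trans ?_
  linarith

lemma aux_L_lip {q : ℕ} [NeZero q] (χ : DirichletCharacter ℂ q) (hχ : χ ≠ 1) {s t : ℝ}
    (hs : 1 < s) (ht : 1 < t) :
    ‖LSeries (fun n => χ (n : ZMod q)) s - LSeries (fun n => χ (n : ZMod q)) t‖ ≤
      4 * q * |s - t| := by
  have := Convex.norm_image_sub_le_of_norm_hasDerivWithin_le (𝕜 := ℝ)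
    (f := fun x : ℝ => LSeries (fun n => χ (n : ZMod q)) x)
    (f' := fun x : ℝ => deriv (LSeries (fun n => χ (n : ZMod q))) x)
    (s := Set.Ioi 1) (C := 4 * q) (x := t) (y := s) ?_ ?_ (convex_Ioi 1) ht hs
  · simpa [Real.norm_eq_abs] using this
  · intro x hx
    have hab : LSeries.abscissaOfAbsConv (fun n => χ (n : ZMod q)) < ((x : ℂ).re : EReal) := by
      rw [DirichletCharacter.absicssaOfAbsConv_eq_one (NeZero.ne q), Complex.ofReal_re]
      exact_mod_cast hx.out
    have h := LSeries_hasDerivAt hab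
    rw [← LSeries_deriv hab] at h
    exact h.comp_ofReal.hasDerivWithinAt
  · intro x hx
    exact aux_L'_le χ hχ hx


open Finset in
lemma aux_geom (w : ℝ) (n : ℕ) : (n : ℝ) * w ^ (n - 1) ≤ ∑ i ∈ range n, (w ^ 2) ^ i := by
  have h := sum_range_reflect (fun i => (w ^ 2) ^ i) n
  have h2 : ∑ i ∈ range n, (2 * w ^ (n - 1)) ≤
      ∑ i ∈ range n, ((w ^ 2) ^ (n - 1 - i) + (w ^ 2) ^ i) := by
    refine sum_le_sum fun i hi => ?_
    have hi' := mem_range.1 hi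
    have e : w ^ (n - 1) = w ^ (n - 1 - i) * w ^ i := by rw [← pow_add]; congr 1; omega
    have h3 (k : ℕ) : (w ^ 2) ^ k = (w ^ k) ^ 2 := by rw [← pow_mul, ← pow_mul, mul_comm]
    rw [e, h3, h3]
    nlinarith [sq_nonneg (w ^ (n - 1 - i) - w ^ i)]
  rw [sum_add_distrib, h] at h2
  simp only [sum_const, card_range, nsmul_eq_mul] at h2
  linarith

noncomputable def monskyB (z : ℝ) (n : ℕ) : ℝ := 1 / (n * (1 - z)) - z ^ n / (1 - z ^ n)

open Finset in
lemma monskyB_succ_le {z : ℝ} (h0 : 0 < z) (h1 : z < 1) (n : ℕ) (hn : 1 ≤ n) :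
    monskyB z (n + 1) ≤ monskyB z n := by
  obtain ⟨w, hw, rfl⟩ : ∃ w : ℝ, 0 < w ∧ w ^ 2 = z :=
    ⟨√z, Real.sqrt_pos.2 h0, Real.sq_sqrt h0.le⟩
  have hw1 : w < 1 := by nlinarith
  set z := w ^ 2 with hz
  have hg (m : ℕ) : 1 - z ^ m = (1 - z) * ∑ i ∈ range m, z ^ i := (mul_neg_geom_sum z m).symm
  have hp (m : ℕ) (hm : 1 ≤ m) : 0 < ∑ i ∈ range m, z ^ i :=
    sum_pos (fun i _ => by positivity) ⟨0, by simp; omega⟩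
  have hs : ∑ i ∈ range (n + 1), z ^ i = (∑ i ∈ range n, z ^ i) + z ^ n := sum_range_succ _ _
  have g1 := aux_geom w n
  have g2 := aux_geom w (n + 1)
  have hzn : z ^ n = w ^ n * w ^ n := by rw [hz, ← pow_mul, ← pow_add]; congr 1; omega
  have hG0 := hp n hn
  have hG1 := hp (n + 1) (by omega)
  have hrec : (∑ i ∈ range (n + 1), z ^ i) = 1 + z * ∑ i ∈ range n, z ^ i := by
    have e1 := hg (n + 1); have e2 := hg n
    have : (1 - z) * (∑ i ∈ range (n + 1), z ^ i) = (1 - z) * (1 + z * ∑ i ∈ range n, z ^ i) := by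
      rw [← e1]; rw [mul_add, mul_left_comm, ← e2]; ring
    exact mul_left_cancel₀ (by linarith) this
  set A := ∑ i ∈ range n, z ^ i
  set B := ∑ i ∈ range (n + 1), z ^ i
  have hn' : (1 : ℝ) ≤ n := by exact_mod_cast hn
  have hwn : w ^ n ≤ w ^ (n - 1) := pow_le_pow_of_le_one hw.le hw1.le (by omega)
  have g1' : n * w ^ n ≤ A := le_trans (by gcongr) g1
  have g2' : (n + 1) * w ^ n ≤ B := by simpa using g2
  have hprod : n * (n + 1) * z ^ n ≤ A * B := by
    have : (n * w ^ n) * ((n + 1) * w ^ n) ≤ A * B := by gcongr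
    rw [hzn]; linarith
  have hdiff : z ^ n / A - z ^ (n + 1) / B = z ^ n / (A * B) := by
    rw [div_sub_div _ _ hG0.ne' hG1.ne']
    congr 1
    rw [hrec]; ring
  have hle : z ^ n / (A * B) ≤ 1 / (n * (n + 1)) := by
    rw [div_le_div_iff₀ (by positivity) (by positivity)]; linarith
  have hz1 : 0 < 1 - z := by linarith
  have e : monskyB z n - monskyB z (n + 1) =
      (1 / (n * (n + 1)) - (z ^ n / A - z ^ (n + 1) / B)) / (1 - z) := by
    unfold monskyB
    have eA : 1 - z ^ n = (1 - z) * A := hg n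
    have eB : 1 - z ^ (n + 1) = (1 - z) * B := hg (n + 1)
    rw [eA, eB]
    clear_value A B
    have : (n : ℝ) ≠ 0 := by positivity
    push_cast
    field_simp
    ring
  have : 0 ≤ monskyB z n - monskyB z (n + 1) := by
    rw [e]; apply div_nonneg _ hz1.le; rw [hdiff]; linarith
  linarith

open Finset in
lemma monskyB_nonneg {z : ℝ} (h0 : 0 < z) (h1 : z < 1) (n : ℕ) (hn : 1 ≤ n) :
    0 ≤ monskyB z n := by
  have hg : 1 - z ^ n = (1 - z) * ∑ i ∈ range n, z ^ i := (mul_neg_geom_sum z n).symm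
  have hge : n * z ^ n ≤ ∑ i ∈ range n, z ^ i := by
    have : ∑ i ∈ range n, z ^ n ≤ ∑ i ∈ range n, z ^ i :=
      sum_le_sum fun i hi => pow_le_pow_of_le_one h0.le h1.le (mem_range.1 hi).le
    simpa using this
  have hn' : (1 : ℝ) ≤ n := by exact_mod_cast hn
  have hz1 : 0 < 1 - z := by linarith
  have hp : 0 < ∑ i ∈ range n, z ^ i := lt_of_lt_of_le (by positivity) hge
  unfold monskyB
  rw [sub_nonneg, hg, div_le_div_iff₀ (by positivity) (by positivity)]
  nlinarith

lemma monskyB_anti {z : ℝ} (h0 : 0 < z) (h1 : z < 1) (i j : ℕ) (hi : 1 ≤ i) (hij : i ≤ j) :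
    monskyB z j ≤ monskyB z i := by
  induction j, hij using Nat.le_induction with
  | base => exact le_rfl
  | succ j hj ih => exact (monskyB_succ_le h0 h1 j (by omega)).trans ih

lemma monskyB_one {z : ℝ} (h1 : z < 1) : monskyB z 1 = 1 := by
  have hz1 : 1 - z ≠ 0 := by linarith
  unfold monskyB; simp; field_simp

open scoped ComplexOrder in
open DirichletCharacter in
lemma aux_zetaMul_sq {q : ℕ} (χ : DirichletCharacter ℂ q) (hχ : χ ^ 2 = 1) (m : ℕ)
    (hm : m ≠ 0) : 1 ≤ zetaMul χ (m ^ 2) := by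
  rw [χ.isMultiplicative_zetaMul.multiplicative_factorization _ (pow_ne_zero 2 hm)]
  rw [Finsupp.prod]
  refine Finset.prod_induction _ (fun x : ℂ => 1 ≤ x) (fun a b ha hb => one_le_mul_of_one_le_of_one_le ha hb) le_rfl ?_
  intro p hp
  have hpp : p.Prime := Nat.prime_of_mem_primeFactors (by simpa using hp)
  rw [Nat.factorization_pow]
  simp only [Finsupp.smul_apply, smul_eq_mul]
  generalize m.factorization p = j
  have hval : zetaMul χ (p ^ (2 * j)) = ∑ k ∈ Finset.range (2 * j + 1), χ (p : ZMod q) ^ k := by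
    rw [zetaMul, ArithmeticFunction.coe_zeta_mul_apply, Nat.sum_divisors_prime_pow hpp]
    refine Finset.sum_congr rfl fun k _ => ?_
    simp [toArithmeticFunction, hpp.ne_zero]
  rw [hval, Finset.sum_range_succ', pow_zero]
  refine le_add_of_nonneg_left ?_
  rcases MulChar.isQuadratic_iff_sq_eq_one.mpr hχ p with h | h | h
  · simp [h]
  · rw [h]; exact Finset.sum_nonneg fun _ _ => by simp
  · rw [h]
    have : ∀ j : ℕ, ∑ k ∈ Finset.range (2 * j), (-1 : ℂ) ^ (k + 1) = 0 := by
      intro j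
      induction j with
      | zero => simp
      | succ j ih =>
        rw [mul_add, mul_one, Finset.sum_range_succ, Finset.sum_range_succ, ih]
        ring
    rw [this]

open DirichletCharacter in
lemma aux_lambert {q : ℕ} (χ : DirichletCharacter ℂ q) (hχ : χ ^ 2 = 1) {z : ℝ}
    (h0 : 0 < z) (h1 : z < 1) (J : ℕ) (hJ : (J : ℝ) ^ 2 * (1 - z) ≤ 1 / 2) :
    ∃ T : ℂ, HasSum (fun n : ℕ => ((z ^ (1 + n) / (1 - z ^ (1 + n)) : ℝ) : ℂ) *
      χ ((1 + n : ℕ) : ZMod q)) T ∧ (J : ℝ) / 2 ≤ T.re := by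
  let G : ℕ+ × ℕ+ → ℂ := fun c => χ ((c.1 : ℕ) : ZMod q) * (z : ℂ) ^ (c.1 * c.2 : ℕ)
  have hz : ‖z‖ < 1 := by rw [Real.norm_of_nonneg h0.le]; exact h1
  have hzc : ‖(z : ℂ)‖ < 1 := by simpa using hz
  have hG : Summable G := by
    refine Summable.of_norm_bounded (summable_prod_mul_pow 0 hz) fun c => ?_
    simp only [G, norm_mul, norm_pow, Complex.norm_real, Real.norm_of_nonneg h0.le, pow_zero, one_mul]
    exact mul_le_of_le_one_left (by positivity) (χ.norm_le_one _)
  -- first evaluation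
  have hinner (d : ℕ+) : HasSum (fun c : ℕ+ => G (d, c))
      (((z ^ (d : ℕ) / (1 - z ^ (d : ℕ)) : ℝ) : ℂ) * χ ((d : ℕ) : ZMod q)) := by
    have hzd : ‖(z : ℂ) ^ (d : ℕ)‖ < 1 := by
      rw [norm_pow]; exact pow_lt_one₀ (norm_nonneg _) hzc d.ne_zero
    have := ((hasSum_geometric_of_norm_lt_one hzd).mul_left
      (χ ((d : ℕ) : ZMod q) * (z : ℂ) ^ (d : ℕ)))
    have h2 := (Equiv.pnatEquivNat.hasSum_iff (f := fun i : ℕ => χ ((d : ℕ) : ZMod q) * (z : ℂ) ^ (d : ℕ) * ((z : ℂ) ^ (d : ℕ)) ^ i)).2 this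
    convert! h2 using 1
    · ext c
      simp only [G, Function.comp, Equiv.pnatEquivNat_apply]
      rw [mul_assoc, ← pow_succ', PNat.natPred, show (c : ℕ) - 1 + 1 = c from Nat.sub_add_cancel c.pos, pow_mul]
    · push_cast; ring
  have hfirst := hG.hasSum.prod_fiberwise hinner
  -- second evaluation
  have hsec : HasSum (fun n : ℕ+ => χ.zetaMul n * (z : ℂ) ^ (n : ℕ)) (∑' c, G c) := by
    have h3 := (sigmaAntidiagonalEquivProd.hasSum_iff).2 hG.hasSum
    have := h3.sigma (g := fun n : ℕ+ => χ.zetaMul n * (z : ℂ) ^ (n : ℕ)) fun n => ?_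
    · exact this
    · have h4 := hasSum_fintype (fun c : Nat.divisorsAntidiagonal (n : ℕ) =>
        (G ∘ sigmaAntidiagonalEquivProd) ⟨n, c⟩)
      convert! h4 using 1
      rw [zetaMul, ArithmeticFunction.coe_zeta_mul_apply, Finset.univ_eq_attach]
      simp only [G, Function.comp, sigmaAntidiagonalEquivProd, divisorsAntidiagonalFactors,
        PNat.mk_coe, Equiv.coe_fn_mk]
      rw [(n : ℕ).divisorsAntidiagonal.sum_attach fun x : ℕ × ℕ ↦ χ (x.1 : ZMod q) * (z : ℂ) ^ (x.1 * x.2),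
        Nat.sum_divisorsAntidiagonal fun x y ↦ χ (x : ZMod q) * (z : ℂ) ^ (x * y), Finset.sum_mul]
      refine Finset.sum_congr rfl fun i hi ↦ ?_
      rw [Nat.mul_div_cancel' (Nat.dvd_of_mem_divisors hi)]
      have : i ≠ 0 := (Nat.pos_of_mem_divisors hi).ne'
      simp [toArithmeticFunction, this]
  refine ⟨∑' c, G c, ?_, ?_⟩
  · have := (Equiv.pnatEquivNat.symm.hasSum_iff).2 hfirst
    convert! this using 1
    ext n
    simp [Function.comp, add_comm]
  · have hre := Complex.hasSum_re hsec
    have hterm (n : ℕ+) : (χ.zetaMul n * (z : ℂ) ^ (n : ℕ)).re = (χ.zetaMul n).re * z ^ (n : ℕ) := by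
      rw [← Complex.ofReal_pow, Complex.re_mul_ofReal]
    simp only [hterm] at hre
    let e : ℕ ↪ ℕ+ := ⟨fun m => ⟨(m + 1) ^ 2, by positivity⟩, fun a b hab => by
      have : (a + 1) ^ 2 = (b + 1) ^ 2 := congrArg PNat.val hab
      have := Nat.pow_left_injective (n := 2) (by norm_num) this
      omega⟩
    have hle := sum_le_hasSum ((Finset.range J).map e) (fun n _ => mul_nonneg
      (Complex.le_def.1 (zetaMul_nonneg hχ n)).1 (pow_nonneg h0.le _)) hre
    refine le_trans ?_ hle
    rw [Finset.sum_map]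
    have : ∑ i ∈ Finset.range J, (1 / 2 : ℝ) = J / 2 := by simp; ring
    rw [← this]
    refine Finset.sum_le_sum fun i hi => ?_
    have h5 : (1 : ℝ) ≤ (χ.zetaMul ((i + 1) ^ 2)).re :=
      (Complex.le_def.1 (aux_zetaMul_sq χ hχ (i + 1) (by omega))).1
    have h6 : (1 : ℝ) / 2 ≤ z ^ ((i + 1) ^ 2) := by
      have hb := one_add_mul_le_pow (a := z - 1) (by linarith) ((i + 1) ^ 2)
      have hi' : ((i : ℝ) + 1) ≤ J := by exact_mod_cast (Finset.mem_range.1 hi)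
      have : ((i : ℝ) + 1) ^ 2 * (1 - z) ≤ (J : ℝ) ^ 2 * (1 - z) := by
        have : 0 ≤ 1 - z := by linarith
        gcongr
      push_cast at hb
      rw [add_sub_cancel] at hb
      linarith
    change (1 : ℝ) / 2 ≤ (χ.zetaMul ((i + 1) ^ 2)).re * z ^ ((i + 1) ^ 2)
    nlinarith

open Filter Topology in
lemma aux_L_one_lower {q : ℕ} [NeZero q] (χ : DirichletCharacter ℂ q) (hχ : χ ≠ 1)
    (hχ2 : χ ^ 2 = 1) : 1 / (64 * (q : ℝ)) ≤ ‖χ.LFunction 1‖ := by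
  have hq : (1 : ℝ) ≤ q := by exact_mod_cast NeZero.one_le
  let S : ℕ → ℂ := fun M => ∑ n ∈ Finset.range M, (((1 + n : ℕ) : ℝ)⁻¹ : ℂ) * χ ((1 + n : ℕ) : ZMod q)
  have hcont : Tendsto (fun s : ℝ => LSeries (fun n => χ (n : ZMod q)) s) (𝓝[>] 1)
      (𝓝 (χ.LFunction 1)) := by
    have h1 : ContinuousAt (fun s : ℝ => χ.LFunction s) 1 := by
      have := (χ.differentiableAt_LFunction 1 (.inr hχ)).continuousAt
      rw [← Complex.ofReal_one] at this
      exact ContinuousAt.comp (f := fun s : ℝ => (s : ℂ)) this (by fun_prop)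
    have h2 := h1.tendsto.mono_left (nhdsWithin_le_nhds (s := Set.Ioi 1))
    rw [Complex.ofReal_one] at h2
    refine h2.congr' ?_
    filter_upwards [self_mem_nhdsWithin] with s hs
    exact χ.LFunction_eq_LSeries (by simpa using hs)
  have hS : Tendsto S atTop (𝓝 (χ.LFunction 1)) := by
    have hb (M : ℕ) : ‖S M - χ.LFunction 1‖ ≤ 2 * q * ((M : ℝ) + 1)⁻¹ := by
      rw [norm_sub_rev]
      have hT : Tendsto (fun s : ℝ => ∑ n ∈ Finset.range (M + 1), LSeries.term (fun n => χ (n : ZMod q)) s n)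
          (𝓝[>] 1) (𝓝 (S M)) := by
        have : S M = ∑ n ∈ Finset.range (M + 1), LSeries.term (fun n => χ (n : ZMod q)) (1 : ℝ) n := by
          rw [Finset.sum_range_succ']
          simp only [LSeries.term_zero, add_zero, S]
          refine Finset.sum_congr rfl fun n _ => ?_
          rw [aux_term _ _ _ (by omega)]
          simp [add_comm]
        rw [this]
        refine tendsto_finsetSum _ fun n _ => ?_
        refine Tendsto.mono_left ?_ nhdsWithin_le_nhds
        have := (LSeries.hasDerivAt_term (fun n => χ (n : ZMod q)) n ((1 : ℝ) : ℂ)).continuousAt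
        exact (ContinuousAt.comp (f := fun s : ℝ => (s : ℂ)) this (by fun_prop)).tendsto
      refine le_of_tendsto (hcont.sub hT).norm ?_
      filter_upwards [self_mem_nhdsWithin] with s hs
      refine (aux_tail χ hχ hs (M + 1) (by omega)).trans ?_
      have h1 : (1 : ℝ) ≤ M + 1 := by linarith [(Nat.cast_nonneg M : (0 : ℝ) ≤ M)]
      push_cast
      gcongr
      exact Real.self_le_rpow_of_one_le h1 (le_of_lt hs)
    rw [tendsto_iff_norm_sub_tendsto_zero]
    refine squeeze_zero (fun _ => norm_nonneg _) hb ?_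
    have := (tendsto_one_div_add_atTop_nhds_zero_nat (𝕜 := ℝ)).const_mul (2 * (q : ℝ))
    simpa using this
  set ε : ℝ := 1 / (128 * (q : ℝ) ^ 2) with hε
  have hε0 : 0 < ε := by positivity
  have hε1 : ε < 1 := by
    rw [hε, div_lt_one (by positivity)]; nlinarith
  obtain ⟨T, hT, hTJ⟩ := aux_lambert χ hχ2 (z := 1 - ε) (by linarith) (by linarith) (8 * q) (by
    rw [hε]; push_cast; apply le_of_eq; field_simp; ring)
  have hlim : ‖(ε : ℂ)⁻¹ * χ.LFunction 1 - T‖ ≤ 2 * q := by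
    refine le_of_tendsto ((hS.const_mul (ε : ℂ)⁻¹).sub hT.tendsto_sum_nat).norm
      (Eventually.of_forall fun M => ?_)
    have := aux_char_abel χ hχ (monskyB (1 - ε)) 1 (monskyB_anti (by linarith) (by linarith))
      (monskyB_nonneg (by linarith) (by linarith)) M
    rw [monskyB_one (by linarith), mul_one] at this
    refine le_trans (le_of_eq ?_) this
    congr 1
    rw [Finset.mul_sum, ← Finset.sum_sub_distrib]
    refine Finset.sum_congr rfl fun n _ => ?_
    unfold monskyB
    rw [sub_sub_cancel]
    have : (ε : ℂ) ≠ 0 := by exact_mod_cast hε0.ne'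
    push_cast
    field_simp
  have h1 : ‖T‖ ≤ ‖(ε : ℂ)⁻¹ * χ.LFunction 1‖ + 2 * q := by
    have := norm_sub_norm_le T ((ε : ℂ)⁻¹ * χ.LFunction 1)
    rw [norm_sub_rev] at this
    linarith
  have h2 := Complex.re_le_norm T
  rw [norm_mul, norm_inv, Complex.norm_of_nonneg hε0.le] at h1
  push_cast at hTJ
  have h3 : 2 * (q : ℝ) ≤ ε⁻¹ * ‖χ.LFunction 1‖ := by linarith
  rw [inv_mul_eq_div, le_div_iff₀ hε0] at h3
  refine le_trans (le_of_eq ?_) h3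
  rw [hε]; field_simp; norm_num


open Finset in
lemma aux_zeta_sum {x : ℝ} (h0 : 0 < x) (h1 : x ≤ 1) (M : ℕ) :
    ∑ n ∈ range M, (((n : ℝ) + 1) ^ (1 + x))⁻¹ ≤ 1 + 1 / x := by
  have key : ∀ M : ℕ, ∑ n ∈ range (M + 1), (((n : ℝ) + 1) ^ (1 + x))⁻¹ ≤
      1 + 1 / x - 1 / (x * ((M : ℝ) + 1) ^ x) := by
    intro M
    induction M with
    | zero => simp
    | succ M ih =>
      rw [sum_range_succ]
      have hM : (0 : ℝ) < (M : ℝ) + 1 := by positivity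
      have hM2 : (0 : ℝ) < (M : ℝ) + 1 + 1 := by positivity
      suffices h : (((M : ℝ) + 1 + 1) ^ (1 + x))⁻¹ ≤
          1 / (x * ((M : ℝ) + 1) ^ x) - 1 / (x * ((M : ℝ) + 1 + 1) ^ x) by
        push_cast; linarith
      set u := (M : ℝ) + 1 with hu
      have hB : (u / (u + 1)) ^ x ≤ 1 - x / (u + 1) := by
        have := rpow_one_add_le_one_add_mul_self (s := -(1 / (u + 1))) (p := x) ?_ h0.le h1
        · convert! this using 1
          · congr 1; field_simp; ring
          · ring
        · rw [neg_le_neg_iff, div_le_one hM2]; linarith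
      rw [Real.div_rpow hM.le hM2.le] at hB
      rw [Real.rpow_add hM2, Real.rpow_one]
      have p1 : 0 < u ^ x := Real.rpow_pos_of_pos hM x
      have p2 : 0 < (u + 1) ^ x := Real.rpow_pos_of_pos hM2 x
      set P := u ^ x
      set Q := (u + 1) ^ x
      have hPQ : P ≤ Q := Real.rpow_le_rpow hM.le (by linarith) h0.le
      rw [div_le_iff₀ p2] at hB
      have hB' : x * Q ≤ (u + 1) * (Q - P) := by
        have : (1 - x / (u + 1)) * Q * (u + 1) = (u + 1) * Q - x * Q := by field_simp
        nlinarith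
      have e : 1 / (x * P) - 1 / (x * Q) = (Q - P) / (x * P * Q) := by field_simp
      rw [e, inv_eq_one_div, div_le_div_iff₀ (by positivity) (by positivity)]
      nlinarith [mul_le_mul_of_nonneg_right hB' p1.le,
        mul_le_mul_of_nonneg_left hPQ (mul_nonneg (sub_nonneg.2 hPQ) hM2.le)]
  rcases M with _ | M
  · simp; positivity
  · refine (key M).trans ?_
    have : 0 ≤ 1 / (x * ((M : ℝ) + 1) ^ x) := by positivity
    linarith

open Finset in
lemma aux_triv_le {q : ℕ} [NeZero q] (χ : DirichletCharacter ℂ q) {x : ℝ} (h0 : 0 < x)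
    (h1 : x ≤ 1) : ‖LSeries (fun n => χ (n : ZMod q)) ((1 + x : ℝ) : ℂ)‖ ≤ 2 / x := by
  have hx : 1 + 1 / x ≤ 2 / x := by
    have : 1 ≤ 1 / x := by rw [le_div_iff₀ h0]; linarith
    have e : 2 / x = 1 / x + 1 / x := by ring
    linarith
  refine aux_tsum_le _ (aux_summable χ (by linarith)) _ fun M => ?_
  refine le_trans ?_ ((aux_zeta_sum h0 h1 M).trans hx)
  have hmono : ∑ n ∈ range M, LSeries.term (fun n => χ (n : ZMod q)) ((1 + x : ℝ) : ℂ) n =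
      ∑ n ∈ range (M - 1), LSeries.term (fun n => χ (n : ZMod q)) ((1 + x : ℝ) : ℂ) (n + 1) := by
    rcases M with _ | M
    · simp
    · rw [sum_range_succ']; simp
  rw [hmono]
  calc _ ≤ ∑ n ∈ range (M - 1), ‖LSeries.term (fun n => χ (n : ZMod q)) ((1 + x : ℝ) : ℂ) (n + 1)‖ :=
        norm_sum_le _ _
    _ ≤ ∑ n ∈ range (M - 1), (((n : ℝ) + 1) ^ (1 + x))⁻¹ := by
        refine sum_le_sum fun n _ => ?_
        rw [aux_term _ _ _ (by omega), norm_mul, Complex.norm_of_nonneg (by positivity)]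
        push_cast
        exact mul_le_of_le_one_right (by positivity) (χ.norm_le_one _)
    _ ≤ _ := sum_le_sum_of_subset_of_nonneg (by intro i; simp; omega) (fun _ _ _ => by positivity)

lemma aux_complex {q : ℕ} [NeZero q] (χ : DirichletCharacter ℂ q) (hχ : χ ^ 2 ≠ 1)
    {x : ℝ} (h0 : 0 < x) (h1 : x ≤ 1) :
    x ^ 3 / (16 * q) ≤ ‖LSeries (fun n => χ (n : ZMod q)) ((1 + x : ℝ) : ℂ)‖ ^ 4 := by
  have h := DirichletCharacter.norm_LSeries_product_ge_one χ h0 0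
  have e1 : (1 + (x : ℂ) + Complex.I * ((0 : ℝ) : ℂ)) = ((1 + x : ℝ) : ℂ) := by simp
  have e2 : (1 + (x : ℂ) + 2 * Complex.I * ((0 : ℝ) : ℂ)) = ((1 + x : ℝ) : ℂ) := by simp
  have e3 : (1 + (x : ℂ)) = ((1 + x : ℝ) : ℂ) := by simp
  rw [e1, e2, e3, norm_mul, norm_mul, norm_pow, norm_pow] at h
  have hq : (1 : ℝ) ≤ q := by exact_mod_cast NeZero.one_le
  have b1 := aux_triv_le (1 : DirichletCharacter ℂ q) h0 h1
  have b2 := aux_L_le (χ ^ 2) hχ (s := 1 + x) (by linarith)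
  set A := ‖LSeries (fun n => (1 : DirichletCharacter ℂ q) (n : ZMod q)) ((1 + x : ℝ) : ℂ)‖
  set B := ‖LSeries (fun n => χ (n : ZMod q)) ((1 + x : ℝ) : ℂ)‖
  set D := ‖LSeries (fun n => (χ ^ 2) (n : ZMod q)) ((1 + x : ℝ) : ℂ)‖
  have hA : 0 ≤ A := norm_nonneg _
  have hB : 0 ≤ B := norm_nonneg _
  have hD : 0 ≤ D := norm_nonneg _
  have : 1 ≤ (2 / x) ^ 3 * B ^ 4 * (2 * q) := h.le.trans (by gcongr)
  rw [div_le_iff₀ (by positivity)]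
  have e : x ^ 3 * ((2 / x) ^ 3 * B ^ 4 * (2 * q)) = B ^ 4 * (16 * q) := by field_simp; ring
  rw [← e]
  exact le_mul_of_one_le_right (by positivity) this

lemma aux_logderiv {q : ℕ} [NeZero q] (χ : DirichletCharacter ℂ q) (hχ : χ ≠ 1)
    {s : ℝ} (hs : 1 < s) (hs' : s ≤ 1 + 1 / (2 ^ 16 * (q : ℝ) ^ 5)) :
    ‖deriv χ.LFunction s / χ.LFunction s‖ ≤ 2 ^ 16 * (q : ℝ) ^ 5 := by
  have hs1 : 1 < (s : ℂ).re := by simpa using hs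
  rw [χ.deriv_LFunction_eq_deriv_LSeries hs1, χ.LFunction_eq_LSeries hs1, norm_div]
  have hq : (1 : ℝ) ≤ q := by exact_mod_cast NeZero.one_le
  set x₀ : ℝ := 1 / (2 ^ 16 * (q : ℝ) ^ 5) with hx0
  have hx0p : 0 < x₀ := by positivity
  have hq5 : (1 : ℝ) ≤ (q : ℝ) ^ 5 := one_le_pow₀ hq
  have hx01 : x₀ ≤ 1 := by
    rw [hx0, div_le_one (by positivity)]; linarith
  have hlow : 4 * q * x₀ ≤ ‖LSeries (fun n => χ (n : ZMod q)) s‖ := by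
    by_cases h2 : χ ^ 2 = 1
    · have h1 := aux_L_one_lower χ hχ h2
      have hl : ‖χ.LFunction 1 - LSeries (fun n => χ (n : ZMod q)) s‖ ≤ 4 * q * (s - 1) := by
        have hcont : Filter.Tendsto (fun t : ℝ => LSeries (fun n => χ (n : ZMod q)) t)
            (nhdsWithin 1 (Set.Ioi 1)) (nhds (χ.LFunction 1)) := by
          have h1 : ContinuousAt (fun s : ℝ => χ.LFunction s) 1 := by
            have := (χ.differentiableAt_LFunction 1 (.inr hχ)).continuousAt
            rw [← Complex.ofReal_one] at this
            exact ContinuousAt.comp (f := fun s : ℝ => (s : ℂ)) this (by fun_prop)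
          have h2 := h1.tendsto.mono_left (nhdsWithin_le_nhds (s := Set.Ioi 1))
          rw [Complex.ofReal_one] at h2
          refine h2.congr' ?_
          filter_upwards [self_mem_nhdsWithin] with s hs
          exact χ.LFunction_eq_LSeries (by simpa using hs)
        refine le_of_tendsto (hcont.sub_const _).norm ?_
        filter_upwards [Ioo_mem_nhdsGT hs] with t ht
        refine (aux_L_lip χ hχ ht.1 hs).trans ?_
        rw [abs_sub_comm, abs_of_pos (by linarith [ht.2])]
        gcongr
        exact ht.1.le
      have h3 := norm_sub_norm_le (χ.LFunction 1) (LSeries (fun n => χ (n : ZMod q)) s)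
      have h4 : 4 * (q : ℝ) * (s - 1) ≤ 4 * q * x₀ := by gcongr; linarith
      have h5 : 2 * (4 * q * x₀) ≤ 1 / (64 * (q : ℝ)) := by
        rw [hx0, le_div_iff₀ (by positivity)]
        have : 2 * (4 * (q : ℝ) * (1 / (2 ^ 16 * (q : ℝ) ^ 5))) * (64 * q) = 1 / (2 ^ 7 * (q : ℝ) ^ 3) := by
          field_simp; norm_num
        rw [this, div_le_one (by positivity)]
        have : (1 : ℝ) ≤ (q : ℝ) ^ 3 := one_le_pow₀ hq
        linarith
      linarith
    · have h1 := aux_complex χ h2 hx0p hx01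
      have h5 : 2 * (4 * q * x₀) ≤ ‖LSeries (fun n => χ (n : ZMod q)) ((1 + x₀ : ℝ) : ℂ)‖ := by
        refine le_of_pow_le_pow_left₀ (n := 4) (by norm_num) (norm_nonneg _) (le_trans (le_of_eq ?_) h1)
        rw [hx0]; field_simp; norm_num
      have h6 := aux_L_lip χ hχ (s := 1 + x₀) (t := s) (by linarith) hs
      have h3 := norm_sub_norm_le (LSeries (fun n => χ (n : ZMod q)) ((1 + x₀ : ℝ) : ℂ)) (LSeries (fun n => χ (n : ZMod q)) s)
      have h4 : 4 * (q : ℝ) * |1 + x₀ - s| ≤ 4 * q * x₀ := by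
        gcongr; rw [abs_of_nonneg (by linarith)]; linarith
      linarith
  have hup := aux_L'_le χ hχ hs
  have hpos : 0 < 4 * q * x₀ := by positivity
  rw [div_le_iff₀ (hpos.trans_le hlow)]
  have e : 2 ^ 16 * (q : ℝ) ^ 5 * (4 * q * x₀) = 4 * q := by rw [hx0]; field_simp
  calc _ ≤ 4 * (q : ℝ) := hup
    _ = 2 ^ 16 * (q : ℝ) ^ 5 * (4 * q * x₀) := e.symm
    _ ≤ _ := by gcongr


open ArithmeticFunction in
lemma aux_vM_summable {s : ℝ} (hs : 1 < s) :
    Summable fun n : ℕ => vonMangoldt n / (n : ℝ) ^ s := by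
  have := LSeries.summable_real_of_abscissaOfAbsConv_lt (f := fun n => vonMangoldt.residueClass (1 : ZMod 1) n) (x := s) <|
        (vonMangoldt.abscissaOfAbsConv_residueClass_le_one (1 : ZMod 1)).trans_lt <| mod_cast hs
  convert! this using 2 with n
  rw [vonMangoldt.residueClass, Set.indicator_of_mem]
  exact Subsingleton.elim _ _

open ArithmeticFunction in
lemma aux_res_summable {q : ℕ} (a : ZMod q) {s : ℝ} (hs : 1 < s) :
    Summable fun n : ℕ => vonMangoldt.residueClass a n / (n : ℝ) ^ s := by
  refine (aux_vM_summable hs).of_nonneg_of_le (fun n => ?_) (fun n => ?_)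
  · exact div_nonneg (vonMangoldt.residueClass_nonneg a n) (by positivity)
  · gcongr; exact vonMangoldt.residueClass_le a n

open ArithmeticFunction in
/-- non-primes contribution -/
lemma aux_np : ∃ C : ℝ, 0 ≤ C ∧ ∃ f : ℕ → ℝ, HasSum f C ∧
    (∀ n, 0 ≤ f n) ∧ ∀ (n : ℕ) (s : ℝ), 1 < s → ¬ n.Prime → vonMangoldt n / (n : ℝ) ^ s ≤ f n := by
  have h := vonMangoldt.summable_residueClass_non_primes_div (1 : ZMod 1)
  have hn : ∀ n : ℕ, 0 ≤ (if n.Prime then 0 else vonMangoldt.residueClass (1 : ZMod 1) n) / n := by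
    intro n
    split_ifs
    · simp
    · exact div_nonneg (vonMangoldt.residueClass_nonneg _ n) (by positivity)
  refine ⟨_, tsum_nonneg hn, _, h.hasSum, hn, fun n s hs hp => ?_⟩
  rw [if_neg hp, vonMangoldt.residueClass, Set.indicator_of_mem (by exact Subsingleton.elim _ _)]
  rcases Nat.eq_zero_or_pos n with rfl | hn
  · simp
  · have h1 : (1 : ℝ) ≤ n := by exact_mod_cast hn
    have : (0 : ℝ) ≤ vonMangoldt n := vonMangoldt_nonneg
    gcongr
    exact Real.self_le_rpow_of_one_le h1 hs.le

open ArithmeticFunction in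
/-- principal character part -/
lemma aux_principal : ∃ C : ℝ, 0 ≤ C ∧ ∀ (q : ℕ) [NeZero q] (s : ℝ), 1 < s → s ≤ 2 →
    1 / (s - 1) - C - q ≤ ∑' n : ℕ, (if IsUnit (n : ZMod q) then vonMangoldt n / (n : ℝ) ^ s else 0) := by
  obtain ⟨C0, hC0⟩ := vonMangoldt.LSeries_residueClass_lower_bound (q := 1) (a := 1) isUnit_one
  obtain ⟨C2, hC2, f, hf, hfn, hfle⟩ := aux_np
  refine ⟨|C0| + C2 + 1, by positivity, fun q _ s hs hs2 => ?_⟩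
  have h1 := hC0 (x := s) ⟨hs, hs2⟩
  have e : ∑' n : ℕ, vonMangoldt.residueClass (1 : ZMod 1) n / (n : ℝ) ^ s =
      ∑' n : ℕ, vonMangoldt n / (n : ℝ) ^ s := by
    refine tsum_congr fun n => ?_
    rw [vonMangoldt.residueClass, Set.indicator_of_mem]
    exact Subsingleton.elim _ _
  rw [e] at h1
  have hvn (n : ℕ) : 0 ≤ vonMangoldt n / (n : ℝ) ^ s := div_nonneg vonMangoldt_nonneg (by positivity)
  have hsV : Summable fun n : ℕ => (if IsUnit (n : ZMod q) then vonMangoldt n / (n : ℝ) ^ s else 0) := by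
    refine (aux_vM_summable hs).of_nonneg_of_le (fun n => ?_) (fun n => ?_)
    · split_ifs; exacts [hvn n, le_rfl]
    · split_ifs; exacts [le_rfl, hvn n]
  let g : ℕ → ℝ := fun n => if n ∈ Finset.range (q + 1) then 1 else 0
  have hg : HasSum g ((q : ℝ) + 1) := by
    have : HasSum g (∑ b ∈ Finset.range (q + 1), g b) := hasSum_sum_of_ne_finset_zero (fun b hb => if_neg hb)
    convert! this using 1
    rw [Finset.sum_congr rfl (g := fun _ => (1 : ℝ)) (fun n hn => if_pos hn)]
    simp
  have hle : ∑' n : ℕ, vonMangoldt n / (n : ℝ) ^ s ≤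
      ∑' n : ℕ, ((if IsUnit (n : ZMod q) then vonMangoldt n / (n : ℝ) ^ s else 0) + (g n + f n)) := by
    refine (aux_vM_summable hs).tsum_le_tsum (fun n => ?_) (hsV.add (hg.add hf).summable)
    have hg0 : 0 ≤ g n := by simp only [g]; split_ifs <;> norm_num
    split_ifs with hu
    · linarith [hfn n]
    · rw [zero_add]
      by_cases hp : n.Prime
      · have hd : n ∣ q := by
          by_contra hnd
          exact hu ((ZMod.isUnit_iff_coprime n q).2 ((Nat.Prime.coprime_iff_not_dvd hp).2 hnd))
        have hnq : n ≤ q := Nat.le_of_dvd (NeZero.pos q) hd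
        have hg1 : g n = 1 := if_pos (by simp; omega)
        have : vonMangoldt n / (n : ℝ) ^ s ≤ 1 := by
          have h0 : (1 : ℝ) ≤ n := by exact_mod_cast hp.one_le
          rw [div_le_one (by positivity)]
          calc vonMangoldt n ≤ Real.log n := vonMangoldt_le_log
            _ ≤ n := by linarith [Real.log_le_sub_one_of_pos (by linarith : (0 : ℝ) < n)]
            _ ≤ _ := Real.self_le_rpow_of_one_le h0 hs.le
        linarith [hfn n]
      · linarith [hfle n s hs hp]
  rw [hsV.tsum_add (hg.add hf).summable, (hg.add hf).tsum_eq] at hle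
  have e2 : ((Nat.totient 1 : ℕ) : ℝ)⁻¹ / (s - 1) = 1 / (s - 1) := by simp
  rw [e2] at h1
  linarith [le_abs_self C0]

open ArithmeticFunction in
lemma aux_res_compare {q : ℕ} [NeZero q] {a : ZMod q} (ha : IsUnit a)
    {s : ℝ} (hs : 1 < s) (hs' : s ≤ 1 + 1 / (2 ^ 16 * (q : ℝ) ^ 5)) :
    (q.totient : ℝ)⁻¹ * (∑' n : ℕ, (if IsUnit (n : ZMod q) then vonMangoldt n / (n : ℝ) ^ s else 0))
      - 2 ^ 16 * (q : ℝ) ^ 5 ≤ ∑' n : ℕ, vonMangoldt.residueClass a n / (n : ℝ) ^ s := by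
  classical
  have hs1 : 1 < (s : ℂ).re := by simpa using hs
  have hφ : (0 : ℝ) < q.totient := by exact_mod_cast Nat.totient_pos.2 (NeZero.pos q)
  have h1 := vonMangoldt.LSeries_residueClass_eq ha hs1
  have eR : LSeries (fun n => (vonMangoldt.residueClass a n : ℂ)) s =
      ((∑' n : ℕ, vonMangoldt.residueClass a n / (n : ℝ) ^ s : ℝ) : ℂ) := by
    rw [LSeries, Complex.ofReal_tsum]
    refine tsum_congr fun n => ?_
    rcases eq_or_ne n 0 with rfl | hn
    · simp
    · rw [LSeries.term_of_ne_zero hn, Complex.ofReal_div, Complex.ofReal_cpow (Nat.cast_nonneg n)]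
      simp
  have eT : -(deriv (DirichletCharacter.LFunction (1 : DirichletCharacter ℂ q)) s / DirichletCharacter.LFunction (1 : DirichletCharacter ℂ q) s) =
      ((∑' n : ℕ, (if IsUnit (n : ZMod q) then vonMangoldt n / (n : ℝ) ^ s else 0) : ℝ) : ℂ) := by
    rw [DirichletCharacter.deriv_LFunction_eq_deriv_LSeries _ hs1, DirichletCharacter.LFunction_eq_LSeries _ hs1,
      ← neg_div, ← DirichletCharacter.LSeries_twist_vonMangoldt_eq _ hs1, LSeries, Complex.ofReal_tsum]
    refine tsum_congr fun n => ?_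
    rcases eq_or_ne n 0 with rfl | hn
    · simp
    · rw [LSeries.term_of_ne_zero hn]
      split_ifs with hu
      · rw [Complex.ofReal_div, Complex.ofReal_cpow (Nat.cast_nonneg n)]
        simp [MulChar.one_apply hu]
      · simp [MulChar.map_nonunit _ hu]
  have ha' : IsUnit a⁻¹ := isUnit_of_dvd_one ⟨a, (ZMod.inv_mul_of_unit a ha).symm⟩
  rw [eR, Fintype.sum_eq_add_sum_compl 1, MulChar.one_apply ha', one_mul] at h1
  set R := ∑' n : ℕ, vonMangoldt.residueClass a n / (n : ℝ) ^ s
  set V := ∑' n : ℕ, (if IsUnit (n : ZMod q) then vonMangoldt n / (n : ℝ) ^ s else 0)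
  set E := ∑ χ ∈ ({1}ᶜ : Finset (DirichletCharacter ℂ q)), χ a⁻¹ *
        (deriv (DirichletCharacter.LFunction χ) s / DirichletCharacter.LFunction χ s) with hE
  have hEn : ‖E‖ ≤ q.totient * (2 ^ 16 * (q : ℝ) ^ 5) := by
    calc ‖E‖ ≤ ∑ χ ∈ ({1}ᶜ : Finset (DirichletCharacter ℂ q)), (2 ^ 16 * (q : ℝ) ^ 5) := by
          refine norm_sum_le_of_le _ fun χ hχ => ?_
          rw [norm_mul]
          have hne : χ ≠ 1 := by simpa using hχ
          exact (mul_le_of_le_one_left (norm_nonneg _) (χ.norm_le_one _)).trans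
            (aux_logderiv χ hne hs hs')
      _ ≤ ∑ χ : DirichletCharacter ℂ q, (2 ^ 16 * (q : ℝ) ^ 5) :=
          Finset.sum_le_sum_of_subset_of_nonneg (Finset.subset_univ _) (fun _ _ _ => by positivity)
      _ = _ := by
          rw [Finset.sum_const, nsmul_eq_mul, Finset.card_univ, ← Nat.card_eq_fintype_card,
            DirichletCharacter.card_eq_totient_of_hasEnoughRootsOfUnity]
  have h2 : (R : ℂ) - (((q.totient : ℝ)⁻¹ * V : ℝ) : ℂ) = -(((q.totient : ℝ)⁻¹ : ℝ) : ℂ) * E := by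
    rw [h1, Complex.ofReal_mul, ← eT]
    push_cast
    ring
  have h3 : ‖(R : ℂ) - (((q.totient : ℝ)⁻¹ * V : ℝ) : ℂ)‖ ≤ 2 ^ 16 * (q : ℝ) ^ 5 := by
    rw [h2, norm_mul, norm_neg, Complex.norm_of_nonneg (by positivity), inv_mul_le_iff₀ hφ]
    exact hEn
  rw [← Complex.ofReal_sub, Complex.norm_real, Real.norm_eq_abs] at h3
  linarith [(abs_le.1 h3).1]

open ArithmeticFunction in
lemma aux_main_lower : ∃ C : ℝ, 0 ≤ C ∧ ∀ (q : ℕ) [NeZero q] (a : ZMod q), IsUnit a →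
    ∀ δ : ℝ, 0 < δ → δ ≤ 1 / (2 ^ 16 * (q : ℝ) ^ 5) →
    1 / (q * δ) - C * (q : ℝ) ^ 5 ≤
      ∑' n : ℕ, (if n.Prime ∧ (n : ZMod q) = a then Real.log n / (n : ℝ) ^ (1 + δ) else 0) := by
  obtain ⟨C0, hC0, h0⟩ := aux_principal
  obtain ⟨C2, hC2, f, hf, hfn, hfle⟩ := aux_np
  refine ⟨C0 + 1 + 2 ^ 16 + C2, by positivity, fun q _ a ha δ hδ hδ' => ?_⟩
  have hq : (1 : ℝ) ≤ q := by exact_mod_cast NeZero.one_le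
  have hφ : (0 : ℝ) < q.totient := by exact_mod_cast Nat.totient_pos.2 (NeZero.pos q)
  have hφ1 : (1 : ℝ) ≤ q.totient := by exact_mod_cast Nat.totient_pos.2 (NeZero.pos q)
  have hφq : (q.totient : ℝ) ≤ q := by exact_mod_cast Nat.totient_le q
  have hq5 : (q : ℝ) ≤ (q : ℝ) ^ 5 := le_self_pow₀ hq (by norm_num)
  have hδ1 : δ ≤ 1 := hδ'.trans (by rw [div_le_one (by positivity)]; nlinarith)
  have hs : 1 < 1 + δ := by linarith
  have h1 := h0 q (1 + δ) hs (by linarith)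
  have h2 := aux_res_compare ha hs (by linarith)
  rw [add_sub_cancel_left] at h1
  have hP : Summable fun n : ℕ => (if n.Prime ∧ (n : ZMod q) = a then Real.log n / (n : ℝ) ^ (1 + δ) else 0) := by
    refine (aux_vM_summable hs).of_nonneg_of_le (fun n => ?_) (fun n => ?_)
    · split_ifs; exacts [div_nonneg (Real.log_natCast_nonneg n) (by positivity), le_rfl]
    · split_ifs with h
      · rw [vonMangoldt_apply_prime h.1]
      · exact div_nonneg vonMangoldt_nonneg (by positivity)
  have h3 : ∑' n : ℕ, vonMangoldt.residueClass a n / (n : ℝ) ^ (1 + δ) ≤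
      ∑' n : ℕ, ((if n.Prime ∧ (n : ZMod q) = a then Real.log n / (n : ℝ) ^ (1 + δ) else 0) + f n) := by
    refine (aux_res_summable a hs).tsum_le_tsum (fun n => ?_) (hP.add hf.summable)
    by_cases hp : n.Prime
    · by_cases hna : (n : ZMod q) = a
      · rw [if_pos ⟨hp, hna⟩, vonMangoldt.residueClass, Set.indicator_of_mem (by exact hna),
          vonMangoldt_apply_prime hp]
        linarith [hfn n]
      · rw [vonMangoldt.residueClass, Set.indicator_of_notMem (by exact hna)]
        simp [hna, hfn n]
    · rw [if_neg (fun h => hp h.1), zero_add]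
      refine le_trans ?_ (hfle n (1 + δ) hs hp)
      gcongr
      exact vonMangoldt.residueClass_le a n
  rw [hP.tsum_add hf.summable, hf.tsum_eq] at h3
  have h4 := mul_le_mul_of_nonneg_left h1 (inv_nonneg.2 hφ.le)
  have h5 : 1 / (q * δ) ≤ (q.totient : ℝ)⁻¹ * (1 / δ) := by
    rw [one_div, mul_inv, one_div]; gcongr
  have h6 : (q.totient : ℝ)⁻¹ * (C0 + q) ≤ 1 * (C0 + q) := by
    gcongr; exact inv_le_one_of_one_le₀ hφ1
  have h7 : (C0 + C2) * 1 ≤ (C0 + C2) * (q : ℝ) ^ 5 := by gcongr; linarith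
  nlinarith

lemma aux_F_le {δ : ℝ} (h0 : 0 < δ) {x y : ℝ} (hx : 0 < x) (hxy : x ≤ y) :
    Real.log y / y ^ (1 + δ) ≤ 2 / δ * (x ^ (1 + δ / 2))⁻¹ := by
  have hy : 0 < y := hx.trans_le hxy
  have h1 : Real.log y ≤ y ^ (δ / 2) / (δ / 2) := Real.log_le_rpow_div hy.le (by positivity)
  calc Real.log y / y ^ (1 + δ) ≤ (y ^ (δ / 2) / (δ / 2)) / y ^ (1 + δ) := by gcongr
    _ = 2 / δ * (y ^ (1 + δ / 2))⁻¹ := by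
      rw [show 1 + δ = (1 + δ / 2) + δ / 2 by ring, Real.rpow_add hy (1 + δ / 2)]
      have : y ^ (δ / 2) ≠ 0 := (Real.rpow_pos_of_pos hy _).ne'
      field_simp
    _ ≤ _ := by gcongr

lemma aux_F_le_one {δ : ℝ} (h0 : 0 < δ) {n : ℕ} (hn : 1 ≤ n) :
    Real.log n / (n : ℝ) ^ (1 + δ) ≤ 1 := by
  have hn' : (1 : ℝ) ≤ n := by exact_mod_cast hn
  rw [div_le_one (by positivity)]
  calc Real.log n ≤ n := (Real.log_le_sub_one_of_pos (by linarith)).trans (by linarith)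
    _ = (n : ℝ) ^ (1 : ℝ) := by simp
    _ ≤ _ := Real.rpow_le_rpow_of_exponent_le hn' (by linarith)

open Finset in
lemma aux_block (G b : ℕ → ℝ) (m : ℕ) (h : ∀ i, ∀ r < m, G (m * i + r) ≤ b i) (M : ℕ) :
    ∑ j ∈ range (m * M), G j ≤ m * ∑ i ∈ range M, b i := by
  induction M with
  | zero => simp
  | succ M ih =>
    rw [Nat.mul_succ, Finset.sum_range_add, Finset.sum_range_succ, mul_add]
    refine add_le_add ih ?_
    refine (Finset.sum_le_sum (g := fun _ => b M) fun r hr => h M r (Finset.mem_range.1 hr)).trans ?_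
    simp

open Finset in
lemma aux_upper (e : ℕ → ℕ) (_he : StrictMono e) (he1 : ∀ j, 1 ≤ e j) (t0 m H : ℕ) (hm : 1 ≤ m)
    (hH : 1 ≤ H) (hgap : ∀ t, t0 ≤ t → e t + H ≤ e (t + m)) {δ : ℝ} (h0 : 0 < δ) (h1 : δ ≤ 1)
    (M : ℕ) :
    ∑ j ∈ range M, Real.log (e j) / (e j : ℝ) ^ (1 + δ) ≤
      t0 + m * (1 + 2 / (δ * H) * (1 + 2 / δ)) := by
  have hH' : (1 : ℝ) ≤ H := by exact_mod_cast hH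
  have hnn (j : ℕ) : 0 ≤ Real.log (e j) / (e j : ℝ) ^ (1 + δ) :=
    div_nonneg (Real.log_natCast_nonneg _) (by positivity)
  have hbig (i r : ℕ) : i * H ≤ e (t0 + (m * i + r)) := by
    induction i with
    | zero => simp
    | succ i ih =>
      have := hgap (t0 + (m * i + r)) (by omega)
      rw [show t0 + (m * (i + 1) + r) = t0 + (m * i + r) + m by ring]
      linarith
  let b : ℕ → ℝ := fun i => if i = 0 then 1 else 2 / (δ * H) * ((i : ℝ) ^ (1 + δ / 2))⁻¹
  have hb : ∀ i, ∀ r < m, Real.log (e (t0 + (m * i + r))) / (e (t0 + (m * i + r)) : ℝ) ^ (1 + δ)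
      ≤ b i := by
    intro i r _
    simp only [b]
    split_ifs with hi
    · exact aux_F_le_one h0 (he1 _)
    · have hi' : (1 : ℝ) ≤ i := by exact_mod_cast Nat.one_le_iff_ne_zero.2 hi
      have hx : (0 : ℝ) < (i : ℝ) * H := by positivity
      have hh : (i : ℝ) * H ≤ e (t0 + (m * i + r)) := by exact_mod_cast hbig i r
      refine (aux_F_le h0 hx hh).trans ?_
      rw [Real.mul_rpow (by positivity) (by positivity), mul_inv]
      have : ((H : ℝ) ^ (1 + δ / 2))⁻¹ ≤ (H : ℝ)⁻¹ := by
        gcongr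
        calc (H : ℝ) = (H : ℝ) ^ (1 : ℝ) := by simp
          _ ≤ _ := Real.rpow_le_rpow_of_exponent_le hH' (by linarith)
      calc 2 / δ * (((i : ℝ) ^ (1 + δ / 2))⁻¹ * ((H : ℝ) ^ (1 + δ / 2))⁻¹)
          ≤ 2 / δ * (((i : ℝ) ^ (1 + δ / 2))⁻¹ * (H : ℝ)⁻¹) := by gcongr
        _ = _ := by field_simp
  have hsum : ∑ j ∈ range M, Real.log (e j) / (e j : ℝ) ^ (1 + δ) ≤
      ∑ j ∈ range (t0 + m * (M + 1)), Real.log (e j) / (e j : ℝ) ^ (1 + δ) := by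
    refine Finset.sum_le_sum_of_subset_of_nonneg ?_ fun j _ _ => hnn j
    refine Finset.range_subset_range.2 ?_
    nlinarith
  refine hsum.trans ?_
  rw [Finset.sum_range_add]
  refine add_le_add ?_ ?_
  · refine (Finset.sum_le_sum (g := fun _ => (1 : ℝ)) fun j _ => aux_F_le_one h0 (he1 j)).trans ?_
    simp
  · refine (aux_block (fun j => Real.log (e (t0 + j)) / (e (t0 + j) : ℝ) ^ (1 + δ)) b m hb (M + 1)).trans ?_
    gcongr
    rw [Finset.sum_range_succ']
    have e0 : b 0 = 1 := by simp [b]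
    have e1 : ∀ i, b (i + 1) = 2 / (δ * H) * (((i : ℝ) + 1) ^ (1 + δ / 2))⁻¹ := by
      intro i; simp [b]
    simp only [e0, e1]
    rw [← Finset.mul_sum, add_comm]
    gcongr
    refine (aux_zeta_sum (x := δ / 2) (by positivity) (by linarith) M).trans ?_
    rw [one_div_div]

lemma aux_infinite (q : ℕ) [NeZero q] (a : ℤ) (h : IsUnit (a : ZMod q)) :
    (setOf (PrimeMod q a)).Infinite := by
  have := Nat.infinite_setOf_prime_and_eq_mod h
  convert! this using 3 with p
  rw [PrimeMod, ← ZMod.intCast_eq_intCast_iff]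
  simp

/-- Contradiction from the two bounds. -/
lemma aux_final (C : ℝ) (hC : 0 ≤ C) :
    ∃ B : ℕ, 1 ≤ B ∧ ∀ q k : ℝ, 3 ≤ q → 2 ≤ k → ∃ δ : ℝ, 0 < δ ∧ δ ≤ 1 ∧
      δ ≤ 1 / (2 ^ 16 * q ^ 5) ∧
      (B * q ^ 7 * k + 1) + (k - 1) * (1 + 2 / (δ * (B * q ^ 7 * k) ^ 2) * (1 + 2 / δ)) <
        1 / (q * δ) - C * q ^ 5 := by
  obtain ⟨B, hB⟩ := exists_nat_ge (C + 2 ^ 20)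
  refine ⟨B, ?_, fun q k hq hk => ?_⟩
  · have : (1 : ℝ) ≤ B := by linarith
    exact_mod_cast this
  have hB0 : (2 : ℝ) ^ 20 ≤ B := by linarith
  have hBp : (0 : ℝ) < B := by linarith
  set S : ℝ := B * q ^ 7 * k with hS
  have hSp : 0 < S := by positivity
  have hq7 : q ^ 7 = q ^ 5 * q ^ 2 := by ring
  have hq2 : 9 ≤ q ^ 2 := by nlinarith
  have hq5 : 1 ≤ q ^ 5 := one_le_pow₀ (by linarith)
  have hδle : 12 * q * k / S ^ 2 ≤ 1 / (2 ^ 16 * q ^ 5) := by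
    rw [div_le_div_iff₀ (by positivity) (by positivity)]
    have : S ^ 2 = B ^ 2 * q ^ 8 * (q ^ 6 * k ^ 2) := by rw [hS]; ring
    rw [this]
    have h1 : (12 * 2 ^ 16 : ℝ) ≤ B ^ 2 := by nlinarith
    have h2 : q ^ 6 * k ≤ q ^ 8 * (q ^ 6 * k ^ 2) := by
      have : q ^ 8 * (q ^ 6 * k ^ 2) = (q ^ 6 * k) * (q ^ 8 * k) := by ring
      rw [this]
      have : 1 ≤ q ^ 8 := one_le_pow₀ (by linarith)
      exact le_mul_of_one_le_right (by positivity) (by nlinarith)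
    calc 12 * q * k * (2 ^ 16 * q ^ 5) = (12 * 2 ^ 16) * (q ^ 6 * k) := by ring
      _ ≤ B ^ 2 * (q ^ 8 * (q ^ 6 * k ^ 2)) := by gcongr
      _ = _ := by ring
  have hδ1 : 12 * q * k / S ^ 2 ≤ 1 := by
    refine hδle.trans ?_
    rw [div_le_one (by positivity)]
    nlinarith
  refine ⟨12 * q * k / S ^ 2, by positivity, hδ1, hδle, ?_⟩
  set δ : ℝ := 12 * q * k / S ^ 2 with hδ
  have hδp : 0 < δ := by positivity
  have e1 : 1 / (q * δ) = S ^ 2 / (12 * q ^ 2 * k) := by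
    rw [hδ]; field_simp
  have e2 : (k - 1) * (1 + 2 / (δ * S ^ 2) * (1 + 2 / δ)) ≤ k + S ^ 2 / (24 * q ^ 2 * k) := by
    have h1 : 1 + 2 / δ ≤ 3 / δ := by
      have : 1 ≤ 1 / δ := by rw [le_div_iff₀ hδp]; linarith
      have e : 3 / δ = 1 / δ + 2 / δ := by ring
      linarith
    calc (k - 1) * (1 + 2 / (δ * S ^ 2) * (1 + 2 / δ)) ≤ k * (1 + 2 / (δ * S ^ 2) * (3 / δ)) := by
          gcongr
          linarith
      _ = k + S ^ 2 / (24 * q ^ 2 * k) := by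
          rw [hδ]; field_simp; ring
  rw [e1]
  have e3 : S ^ 2 / (12 * q ^ 2 * k) = S ^ 2 / (24 * q ^ 2 * k) + S ^ 2 / (24 * q ^ 2 * k) := by
    field_simp; ring
  have e4 : S ^ 2 / (24 * q ^ 2 * k) = S * (B * q ^ 5 / 24) := by
    rw [hS]; field_simp
  have hBq : B ≤ B * q ^ 5 := le_mul_of_one_le_right hBp.le hq5
  have h5 : 4 * S < S * (B * q ^ 5 / 24) := by
    have : 4 < B * q ^ 5 / 24 := by linarith
    nlinarith
  have h7 : 1 ≤ q ^ 7 := one_le_pow₀ (by linarith)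
  have hkS : k ≤ S := by
    rw [hS]
    refine le_mul_of_one_le_left (by linarith) ?_
    nlinarith
  have hCS : C * q ^ 5 ≤ S := by
    have : C * q ^ 5 ≤ B * q ^ 7 := by
      gcongr
      · linarith
      · linarith
      · norm_num
    rw [hS]
    refine this.trans (le_mul_of_one_le_right (by positivity) (by linarith))
  rw [e3, e4] 
  rw [e4] at e2
  linarith

lemma aux_exists_good :
    ∃ A N : ℝ, 0 < A ∧ 0 < N ∧
      ∀ (q : ℕ) (a : ℤ), 3 ≤ q → Int.gcd a q = 1 → ∀ k : ℕ, 2 ≤ k →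
        ∃ t : ℕ, 1 ≤ t ∧ k < ell q a (t + 1) ∧
          ell q a (t + k) < ell q a (t + 1) ^ 2 ∧
          ((ell q a (t + k) : ℝ) - (ell q a (t + 1) : ℝ)) <
            A * (q : ℝ) ^ N * (k : ℝ) ^ 2 * Real.log (q * k) := by
  obtain ⟨C, hC, hlow⟩ := aux_main_lower
  obtain ⟨B, hB1, hB⟩ := aux_final C hC
  have hBr : (1 : ℝ) ≤ B := by exact_mod_cast hB1
  refine ⟨(B : ℝ) ^ 2, (14 : ℕ), by positivity, by norm_num, fun q a hq hga k hk => ?_⟩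
  have : NeZero q := ⟨by omega⟩
  have hqr : (3 : ℝ) ≤ q := by exact_mod_cast hq
  have hkr : (2 : ℝ) ≤ k := by exact_mod_cast hk
  have hu : IsUnit (a : ZMod q) := by
    rw [ZMod.coe_int_isUnit_iff_isCoprime, Int.isCoprime_iff_gcd_eq_one, Int.gcd_comm]
    exact hga
  have hinf := aux_infinite q a hu
  set e : ℕ → ℕ := Nat.nth (PrimeMod q a) with he_def
  have he : StrictMono e := Nat.nth_strictMono hinf
  have hep (j : ℕ) : PrimeMod q a (e j) := Nat.nth_mem_of_infinite hinf j
  have hidx (t : ℕ) : ell q a (t + 1) = e t := by simp [ell, he_def]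
  have hidx2 (t : ℕ) : ell q a (t + k) = e (t + (k - 1)) := by
    rw [← hidx]; congr 1; omega
  simp only [hidx, hidx2]
  by_contra hno
  push Not at hno
  let S : ℕ := B * q ^ 7 * k
  have hkS : k ≤ S := Nat.le_mul_of_pos_left _ (by positivity)
  have hS2 : ((S ^ 2 : ℕ) : ℝ) ≤ (B : ℝ) ^ 2 * (q : ℝ) ^ ((14 : ℕ) : ℝ) * (k : ℝ) ^ 2 * Real.log (q * k) := by
    rw [Real.rpow_natCast]
    have hl : 1 ≤ Real.log (q * k) := by
      rw [Real.le_log_iff_exp_le (by positivity)]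
      have := Real.exp_one_lt_d9
      nlinarith
    have e1 : ((S ^ 2 : ℕ) : ℝ) = (B : ℝ) ^ 2 * (q : ℝ) ^ 14 * (k : ℝ) ^ 2 := by
      simp only [S]; push_cast; ring
    rw [e1]
    exact le_mul_of_one_le_right (by positivity) hl
  have hgap : ∀ t, S + 1 ≤ t → e t + S ^ 2 ≤ e (t + (k - 1)) := by
    intro t ht
    by_contra hlt
    push Not at hlt
    have hte : t ≤ e t := he.le_apply
    have := hno t (by omega) (by omega) (by nlinarith)
    have h3 : (e (t + (k - 1)) : ℝ) < e t + (S ^ 2 : ℕ) := by exact_mod_cast hlt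
    linarith
  obtain ⟨δ, h0, h1, hδ, hcon⟩ := hB q k hqr hkr
  have hl := hlow q (a : ZMod q) hu δ h0 hδ
  have hiff (n : ℕ) : (n.Prime ∧ (n : ZMod q) = (a : ZMod q)) ↔ PrimeMod q a n := by
    rw [PrimeMod, ← ZMod.intCast_eq_intCast_iff]; simp
  have htsum : (∑' n : ℕ, (if n.Prime ∧ (n : ZMod q) = (a : ZMod q) then
      Real.log n / (n : ℝ) ^ (1 + δ) else 0)) = ∑' j : ℕ, Real.log (e j) / (e j : ℝ) ^ (1 + δ) := by
    rw [← he.injective.tsum_eq]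
    · refine tsum_congr fun j => ?_
      rw [if_pos ((hiff _).2 (hep j))]
    · intro n hn
      have hP : PrimeMod q a n := by
        by_contra hh
        exact hn (if_neg fun h => hh ((hiff n).1 h))
      have : n ∈ Set.range (Nat.nth (PrimeMod q a)) := by
        rw [Nat.range_nth_of_infinite hinf]; exact hP
      exact this
  have hup := aux_upper e he (fun j => (hep j).1.one_le) (S + 1) (k - 1) (S ^ 2) (by omega)
    (Nat.one_le_pow _ _ (by omega)) hgap h0 h1
  have hup2 := Real.tsum_le_of_sum_range_le (fun j => div_nonneg (Real.log_natCast_nonneg _)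
    (by positivity)) hup
  rw [htsum] at hl
  have hfin := hl.trans hup2
  rw [Nat.cast_sub (by omega)] at hfin
  simp only [S] at hfin
  push_cast at hfin
  linarith


/-- There exist absolute positive constants `A` and `N` such that for all integers
`q ≥ 3` and `a` with `gcd(a, q) = 1` and every `k ≥ 2`, there is a `t ≥ 1` with
`k < ℓ_{t+1}`, `ℓ_{t+k} < ℓ_{t+1}²`, and `ℓ_{t+k} − ℓ_{t+1} < A q^N k² log(qk)`. -/
theorem exists_good_t_with_bound :
    ∃ A N : ℝ, 0 < A ∧ 0 < N ∧
      ∀ (q : ℕ) (a : ℤ), 3 ≤ q → Int.gcd a q = 1 → ∀ k : ℕ, 2 ≤ k →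
        ∃ t : ℕ, 1 ≤ t ∧ k < ell q a (t + 1) ∧
          ell q a (t + k) < ell q a (t + 1) ^ 2 ∧
          ((ell q a (t + k) : ℝ) - (ell q a (t + 1) : ℝ)) <
            A * (q : ℝ) ^ N * (k : ℝ) ^ 2 * Real.log (q * k) := by
  exact aux_exists_good
end
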